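/- The number of self-complementary plane partitions inside a (2a) × (2b) × (2c) box equals the number of ordered pairs of plane partitions each fitting inside an a × b × c box. Equivalently, the number of order ideals I of [2a]×[2b]×[2c] satisfying I = complement of the 180°-rotation of I equals |J([a]×[b]×[c])|². -/

import Mathlib

/-!
Along its diagonals a plane partition is a chain of interlacing sets of positions, growing from the
empty partition to a rectangle, so plane partitions are counted by a Jacobi–Trudi determinant, the
specialisation of a rectangular Schur function at `a + b` ones. Complementation reverses the chain
and reflects its positions. A self-complementary plane partition is therefore determined by the
first half of its chain, which ends in a symmetric set of positions, and the theorem becomes the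
identity that the square of one Schur function of rectangular shape is the sum of the Schur
functions over all symmetric sets of positions.

That sum of minors is a Pfaffian of a matrix built from moments of the linear functional
`g : X ^ k ↦ g k`, where `g` lists the complete homogeneous functions by decreasing degree. Let `P`
be the monic orthogonal polynomial of degree `a` for `g`, and pass to the basis
`1, X, …, X ^ (a - 1), P, X * P, …, X ^ (a - 1) * P`. By orthogonality the lower right block becomes
symmetric, so it does not contribute to the Pfaffian, and the off-diagonal part becomes `H * B * H`,
where `H` is the Hankel matrix of `g` and `B` is the Bezout matrix of `P`, of determinant `±1`. As
`det H` is up to sign the Jacobi–Trudi determinant of the rectangle, its square comes out.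
-/

open Equiv Finset Matrix Polynomial

namespace PlanePartition

section Pfaffian

variable {R ι κ : Type*} [CommRing R] [Fintype ι] [DecidableEq ι]

/-- The unnormalised Pfaffian of `X`: for alternating `X` it is `|ι|! * 2 ^ |ι|` times the Pfaffian.
Keeping all permutations, instead of one per perfect matching, avoids every division. -/
def pfaffianSum (X : Matrix (ι ⊕ ι) (ι ⊕ ι) R) : R :=
  ∑ σ : Perm (ι ⊕ ι), Perm.sign σ • ∏ r, X (σ (.inl r)) (σ (.inr r))

theorem pfaffianSum_transpose_mul [Fintype κ] (A C : Matrix κ (ι ⊕ ι) R) :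
    pfaffianSum (Aᵀ * C) =
      ∑ k : ι → κ, (fromRows (A.submatrix k id) (C.submatrix k id)).det := by
  simp only [pfaffianSum, mul_apply, transpose_apply, Fintype.prod_sum, smul_sum]
  rw [sum_comm]
  refine sum_congr rfl fun k _ => ?_
  rw [← det_transpose, det_apply]
  simp only [Fintype.prod_sum_type, transpose_apply, fromRows_apply_inl, fromRows_apply_inr,
    submatrix_apply, id, prod_mul_distrib]

theorem pfaffianSum_transpose_mul_mul (U X : Matrix (ι ⊕ ι) (ι ⊕ ι) R) :
    pfaffianSum (Uᵀ * X * U) = pfaffianSum X * U.det := by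
  have hX := pfaffianSum_transpose_mul (1 : Matrix (ι ⊕ ι) (ι ⊕ ι) R) X
  rw [transpose_one, one_mul] at hX
  rw [mul_assoc, pfaffianSum_transpose_mul, hX, sum_mul]
  refine sum_congr rfl fun k _ => ?_
  rw [← det_mul, fromRows_mul, submatrix_mul _ _ k id id Function.bijective_id, submatrix_id_id]
  congr 2
  exact (one_submatrix_mul k (Equiv.refl _) U).symm

theorem sum_sign_smul_prod_eq_zero_of_isSymm (F : ι → Matrix (ι ⊕ ι) (ι ⊕ ι) R) {r₀ : ι}
    (hr₀ : (F r₀).IsSymm) :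
    ∑ σ : Perm (ι ⊕ ι), Perm.sign σ • ∏ r, F r (σ (.inl r)) (σ (.inr r)) = 0 := by
  let τ : Perm (ι ⊕ ι) := swap (.inl r₀) (.inr r₀)
  refine sum_involution (fun σ _ => σ * τ) (fun σ _ => ?_) (fun σ _ _ h => ?_)
    (fun σ _ => mem_univ _) (fun σ _ => by simp [τ, mul_assoc])
  · have hprod : ∏ r, F r ((σ * τ) (.inl r)) ((σ * τ) (.inr r)) =
        ∏ r, F r (σ (.inl r)) (σ (.inr r)) := by
      refine prod_congr rfl fun r _ => ?_
      rcases eq_or_ne r r₀ with rfl | hr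
      · simpa [τ] using hr₀.apply _ _
      · simp [τ, swap_apply_of_ne_of_ne, hr]
    rw [hprod, Perm.sign_mul, Perm.sign_swap Sum.inl_ne_inr]
    simp
  · simpa [τ] using DFunLike.congr_fun h (.inl r₀)

theorem pfaffianSum_add_of_isSymm (X : Matrix (ι ⊕ ι) (ι ⊕ ι) R)
    {S : Matrix (ι ⊕ ι) (ι ⊕ ι) R} (hS : S.IsSymm) : pfaffianSum (X + S) = pfaffianSum X := by
  simp only [pfaffianSum, Matrix.add_apply, prod_add, smul_sum, powerset_univ]
  rw [sum_comm, sum_eq_single univ]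
  · simp
  · intro s _ hs
    obtain ⟨r₀, hr₀⟩ : ∃ r₀, r₀ ∉ s := by simpa [eq_univ_iff_forall] using hs
    rw [← sum_sign_smul_prod_eq_zero_of_isSymm (fun r => if r ∈ s then X else S) (r₀ := r₀)
      (by simpa [hr₀] using hS)]
    refine sum_congr rfl fun σ _ => ?_
    rw [← prod_mul_prod_compl s, ← compl_eq_univ_sdiff]
    congr 2 <;> refine prod_congr rfl fun r hr => ?_
    · rw [if_pos hr]
    · rw [if_neg (mem_compl.mp hr)]
  · simp

theorem det_fromRows_submatrix_comp_perm (A C : Matrix κ (ι ⊕ ι) R) (k : ι → κ) (σ : Perm ι) :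
    (fromRows (A.submatrix (k ∘ σ) id) (C.submatrix (k ∘ σ) id)).det =
      (fromRows (A.submatrix k id) (C.submatrix k id)).det := by
  have h : fromRows (A.submatrix (k ∘ σ) id) (C.submatrix (k ∘ σ) id) =
      (fromRows (A.submatrix k id) (C.submatrix k id)).submatrix (sumCongr σ σ) id := by
    ext (i | i) j <;> simp
  rw [h, det_permute, Perm.sign_sumCongr]
  simp

theorem det_fromRows_submatrix_eq_zero (A C : Matrix κ (ι ⊕ ι) R) {k : ι → κ}
    (hk : ¬ Function.Injective k) :
    (fromRows (A.submatrix k id) (C.submatrix k id)).det = 0 := by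
  obtain ⟨r, s, hrs, hne⟩ := Function.not_injective_iff.mp hk
  exact det_zero_of_row_eq (i := .inl r) (j := .inl s) (by simpa using hne)
    (by ext j; simp [hrs])

theorem pfaffianSum_fromBlocks_zero_zero (Z B : Matrix ι ι R) :
    pfaffianSum (fromBlocks Z B 0 0) = (Fintype.card ι).factorial • B.det := by
  have hfactor : fromBlocks Z B 0 0 = (fromCols (1 : Matrix ι ι R) (0 : Matrix ι ι R))ᵀ *
      fromCols Z B := by
    simp [transpose_fromCols, fromRows_mul]
  rw [hfactor, pfaffianSum_transpose_mul]
  rw [← Fintype.sum_of_injective (fun σ : Perm ι => (σ : ι → ι)) DFunLike.coe_injective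
    (fun _ => B.det) _ ?_ ?_, sum_const, card_univ, Fintype.card_perm]
  · intro k hk
    refine det_fromRows_submatrix_eq_zero _ _ fun hinj => hk ?_
    exact ⟨ofBijective k hinj.bijective_of_finite, rfl⟩
  · refine fun σ => ((det_fromRows_submatrix_comp_perm _ _ id σ).trans ?_).symm
    rw [submatrix_id_id, submatrix_id_id, fromRows_fromCols_eq_fromBlocks, det_fromBlocks_zero₁₂,
      det_one, one_mul]

theorem pfaffianSum_fromBlocks_of_isSymm (Z B C : Matrix ι ι R) {D : Matrix ι ι R}
    (hD : D.IsSymm) :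
    pfaffianSum (fromBlocks Z B C D) = (Fintype.card ι).factorial • (B - Cᵀ).det := by
  have hsplit : fromBlocks Z B C D = fromBlocks Z (B - Cᵀ) 0 0 + fromBlocks 0 Cᵀ C D := by
    simp [fromBlocks_add]
  rw [hsplit, pfaffianSum_add_of_isSymm _ (.fromBlocks isSymm_zero (transpose_transpose C) hD),
    pfaffianSum_fromBlocks_zero_zero]

theorem sum_eq_factorial_smul_sum_orderEmbedding {M : Type*} [AddCommMonoid M] {n : ℕ}
    [Fintype κ] [LinearOrder κ] (f : (Fin n → κ) → M)
    (hperm : ∀ k (σ : Perm (Fin n)), f (k ∘ σ) = f k)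
    (hinj : ∀ k, ¬ Function.Injective k → f k = 0) :
    ∑ k, f k = n.factorial • ∑ k : Fin n ↪o κ, f k := by
  have hunique : Function.Injective
      fun x : (Fin n ↪o κ) × Perm (Fin n) => (x.1 : Fin n → κ) ∘ x.2 := by
    rintro ⟨k, σ⟩ ⟨k', σ'⟩ (h : k ∘ σ = k' ∘ σ')
    obtain rfl : k = k' := OrderEmbedding.range_inj.mp <| by
      rw [← σ.surjective.range_comp, h, σ'.surjective.range_comp]
    exact congr_arg _ (Equiv.ext fun i => k.injective (congr_fun h i))
  rw [← Fintype.sum_of_injective _ hunique (fun x => f x.1) _ ?_ fun x => (hperm _ _).symm,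
    Fintype.sum_prod_type, smul_sum]
  · simp [Fintype.card_perm]
  · intro k hk
    refine hinj k fun hk' => hk ?_
    have hmono : StrictMono (k ∘ Tuple.sort k) :=
      (Tuple.monotone_sort k).strictMono_of_injective (hk'.comp (Tuple.sort k).injective)
    exact ⟨(OrderEmbedding.ofStrictMono _ hmono, (Tuple.sort k).symm), by ext; simp⟩

end Pfaffian

section Moments

variable {R κ : Type*} [CommRing R]

/-- The value at `X ^ u * P` of the linear functional that sends `X ^ k` to `g k`. -/
noncomputable def moment (g : ℤ → R) (P : R[X]) (u : ℤ) : R :=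
  P.sum fun k c => c * g (u + k)

theorem moment_eq_sum_range (g : ℤ → R) {P : R[X]} {n : ℕ} (hP : P.natDegree < n) (u : ℤ) :
    moment g P u = ∑ k ∈ range n, P.coeff k * g (u + k) :=
  P.sum_over_range' (f := fun k c => c * g (u + k)) (fun _ => zero_mul _) n hP

theorem moment_eq_zero_of_le {g : ℤ → R} {m : ℤ} (hg : ∀ u, m ≤ u → g u = 0) (P : R[X]) {u : ℤ}
    (hu : m ≤ u) : moment g P u = 0 := by
  rw [moment_eq_sum_range g (Nat.lt_succ_self _)]
  exact sum_eq_zero fun k _ => by rw [hg _ (by omega), mul_zero]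

theorem moment_X_pow_mul (g : ℤ → R) (P : R[X]) (j : ℕ) (u : ℤ) :
    moment g (X ^ j * P) u = moment g P (u + j) := by
  have hdeg : (X ^ j * P).natDegree < j + (P.natDegree + 1) :=
    (natDegree_mul_le_of_le (natDegree_X_pow_le j) le_rfl).trans_lt (by omega)
  rw [moment_eq_sum_range g hdeg, moment_eq_sum_range g (Nat.lt_succ_self _), sum_range_add,
    sum_eq_zero fun k hk => ?_, zero_add]
  · refine sum_congr rfl fun k _ => ?_
    rw [add_comm j k, coeff_X_pow_mul]
    push_cast
    ring_nf
  · rw [coeff_X_pow_mul', if_neg (by simpa using hk), zero_mul]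

/-- A row of consecutive values of `f` for each element of `κ`, starting at the argument `u t`. -/
def windowMatrix (f : ℤ → R) (u : κ → ℤ) (n : ℕ) : Matrix κ (Fin n) R :=
  of fun t j => f (u t + j)

/-- The windows starting at the nonnegative arguments `0, 1, …, m - 1`, in this order. For `m = n`
this is a Hankel matrix. -/
abbrev nonnegWindows (f : ℤ → R) (m n : ℕ) : Matrix (Fin m) (Fin n) R :=
  windowMatrix f (fun t : Fin m => (t : ℤ)) n

/-- The windows starting at the negative arguments `-1, -2, …, -m`, in this order. -/
abbrev negWindows (f : ℤ → R) (m n : ℕ) : Matrix (Fin m) (Fin n) R :=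
  windowMatrix f (fun t : Fin m => -1 - (t : ℤ)) n

/-- Windows of length `2 * n`, cut into two halves. -/
def wideWindowMatrix (f : ℤ → R) (u : κ → ℤ) (n : ℕ) : Matrix κ (Fin n ⊕ Fin n) R :=
  fromCols (windowMatrix f u n) (windowMatrix f (fun t => u t + n) n)

/-- The coordinates, in the monomial basis `1, X, …, X ^ (2 * n - 1)`, of the polynomials
`1, X, …, X ^ (n - 1), P, X * P, …, X ^ (n - 1) * P`, where `n` is the degree of `P`. -/
noncomputable def shiftBasisMatrix (P : R[X]) :
    Matrix (Fin P.natDegree ⊕ Fin P.natDegree) (Fin P.natDegree ⊕ Fin P.natDegree) R :=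
  fromBlocks 1 (of fun i j => (X ^ (j : ℕ) * P).coeff i) 0
    (of fun i j => (X ^ (j : ℕ) * P).coeff (P.natDegree + i))

theorem wideWindowMatrix_mul_shiftBasisMatrix (g : ℤ → R) (u : κ → ℤ) (P : R[X]) :
    wideWindowMatrix g u P.natDegree * shiftBasisMatrix P =
      fromCols (windowMatrix g u P.natDegree) (windowMatrix (moment g P) u P.natDegree) := by
  rw [wideWindowMatrix, shiftBasisMatrix, fromCols_mul_fromBlocks, Matrix.mul_one,
    Matrix.mul_zero, add_zero]
  congr 1
  ext t j
  have hdeg : (X ^ (j : ℕ) * P).natDegree < P.natDegree + P.natDegree :=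
    (natDegree_mul_le_of_le (natDegree_X_pow_le j) le_rfl).trans_lt (by omega)
  simp only [Matrix.add_apply, mul_apply, windowMatrix, of_apply]
  rw [← moment_X_pow_mul, moment_eq_sum_range g hdeg, sum_range_add, sum_range, sum_range]
  simp only [Nat.cast_add, add_assoc, mul_comm]

theorem det_coeff_X_pow_mul {P : R[X]} (hP : P.Monic) (n : ℕ) :
    (of fun i j : Fin n => (X ^ (j : ℕ) * P).coeff (P.natDegree + i)).det = 1 := by
  rw [det_of_isUpperTriangular]
  · refine prod_eq_one fun i _ => ?_
    rw [of_apply, coeff_X_pow_mul]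
    exact hP
  · intro i j hij
    have hij' : (j : ℕ) < i := hij
    rw [of_apply, coeff_X_pow_mul', if_pos (by omega)]
    exact coeff_eq_zero_of_natDegree_lt (by omega)

theorem det_shiftBasisMatrix {P : R[X]} (hP : P.Monic) :
    (shiftBasisMatrix P).det = 1 := by
  rw [shiftBasisMatrix, det_fromBlocks_zero₂₁, det_one, det_coeff_X_pow_mul hP, one_mul]

/-- The Hankel matrix of the coefficients of `P` of positive degree; it is the Gram matrix of the
Bezoutian `(P x - P y) / (x - y)`. -/
def bezoutMatrix (P : R[X]) : Matrix (Fin P.natDegree) (Fin P.natDegree) R :=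
  of fun i j => P.coeff (i + j + 1)

theorem det_bezoutMatrix {P : R[X]} (hP : P.Monic) :
    (bezoutMatrix P).det = Perm.sign (Fin.revPerm : Perm (Fin P.natDegree)) := by
  have hsub : bezoutMatrix P =
      (of fun i j : Fin P.natDegree => (X ^ (j : ℕ) * P).coeff (P.natDegree + i)).submatrix id
        Fin.revPerm := by
    ext i j
    simp only [bezoutMatrix, of_apply, submatrix_apply, id, Fin.revPerm_apply, Fin.val_rev]
    rw [coeff_X_pow_mul', if_pos (by omega)]
    congr 1
    omega
  rw [hsub, det_permute', det_coeff_X_pow_mul hP, mul_one]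

theorem exists_monic_moment_eq_zero {K : Type*} [Field K] {g : ℤ → K} {n : ℕ}
    (hg : (nonnegWindows g n n).det ≠ 0) :
    ∃ P : K[X], P.Monic ∧ P.natDegree = n ∧ ∀ i : Fin n, moment g P i = 0 := by
  obtain ⟨v, hv⟩ := (mulVec_surjective_iff_isUnit.mpr
    ((isUnit_iff_isUnit_det _).mpr hg.isUnit)) fun i : Fin n => -g (i + n)
  let Q : K[X] := ∑ k : Fin n, C (v k) * X ^ (k : ℕ)
  have hQ : Q.degree < n := degree_sum_fin_lt v
  have hdeg : (X ^ n + Q).natDegree = n := natDegree_eq_of_degree_eq_some <| by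
    rw [degree_add_eq_left_of_degree_lt (by rwa [degree_X_pow]), degree_X_pow]
  refine ⟨X ^ n + Q, monic_X_pow_add hQ, hdeg, fun i => ?_⟩
  have hcoeff (k : Fin n) : (X ^ n + Q).coeff k = v k := by
    simp [Q, coeff_X_pow, k.isLt.ne, Fin.val_inj]
  have htop : (X ^ n + Q).coeff n = 1 := by
    simpa [hdeg] using (monic_X_pow_add hQ).coeff_natDegree
  have hvi := congr_fun hv i
  rw [moment_eq_sum_range g (by omega : _ < n + 1), sum_range_succ, sum_range, htop, one_mul]
  simp only [hcoeff]
  simp only [mulVec, dotProduct, nonnegWindows, windowMatrix, of_apply, mul_comm] at hvi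
  rw [hvi, neg_add_cancel]

end Moments

section Bezout

variable {R : Type*} [CommRing R]

/-- For `F` vanishing from `m` on, and `0 ≤ i`, the sum of all `F u` with `i ≤ u`. -/
def tailSum (m : ℕ) (F : ℤ → R) (i : ℤ) : R :=
  ∑ t ∈ range m, F (i + t)

theorem tailSum_eq_sum_range_add {m : ℕ} {F : ℤ → R} (hF : ∀ u, (m : ℤ) ≤ u → F u = 0) {i : ℤ}
    (hi : 0 ≤ i) (l : ℕ) : tailSum m F i = ∑ t ∈ range l, F (i + t) + tailSum m F (i + l) := by
  have hzero : ∑ t ∈ range l, F (i + (m + t : ℕ)) = 0 :=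
    sum_eq_zero fun t _ => hF _ (by omega)
  calc tailSum m F i = ∑ t ∈ range (m + l), F (i + t) := by
        rw [sum_range_add, hzero, add_zero, tailSum]
    _ = _ := by
        rw [add_comm m l, sum_range_add]
        simp only [tailSum, Nat.cast_add, add_assoc]

theorem tailSum_eq_tailSum_zero {m n i : ℕ} {F : ℤ → R} (hF : ∀ u, (m : ℤ) ≤ u → F u = 0)
    (hF₀ : ∀ u : ℕ, u < n → F u = 0) (hi : i ≤ n) : tailSum m F i = tailSum m F 0 := by
  have hzero : ∑ t ∈ range i, F (0 + t) = 0 :=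
    sum_eq_zero fun t ht => by rw [zero_add, hF₀ t ((mem_range.mp ht).trans_le hi)]
  rw [tailSum_eq_sum_range_add hF le_rfl i, hzero, zero_add, zero_add]

theorem nonnegWindows_transpose_mul_negWindows_apply (f₁ f₂ : ℤ → R) (m : ℕ) {n : ℕ}
    (i j : Fin n) :
    ((nonnegWindows f₁ m n)ᵀ * negWindows f₂ m n) i j =
      tailSum m (fun u => f₁ u * f₂ (i + j - 1 - u)) i := by
  simp only [mul_apply, transpose_apply, nonnegWindows, negWindows, windowMatrix, of_apply, tailSum,
    sum_range]
  refine sum_congr rfl fun t _ => ?_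
  congr 2 <;> ring

theorem tailSum_mul_moment_sub {g : ℤ → R} {m : ℕ} (hg : ∀ u, (m : ℤ) ≤ u → g u = 0) (P : R[X])
    {i : ℤ} (hi : 0 ≤ i) (s : ℤ) :
    tailSum m (fun u => g u * moment g P (s - u)) i -
        tailSum m (fun u => moment g P u * g (s - u)) i =
      ∑ k ∈ range (P.natDegree + 1),
        P.coeff k * ∑ t ∈ range k, g (i + t) * g (s + k - (i + t)) := by
  have hleft : tailSum m (fun u => g u * moment g P (s - u)) i =
      ∑ k ∈ range (P.natDegree + 1), P.coeff k * tailSum m (fun u => g u * g (s + k - u)) i := by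
    simp only [tailSum, moment_eq_sum_range g (Nat.lt_succ_self _), mul_sum]
    rw [sum_comm]
    exact sum_congr rfl fun k _ => sum_congr rfl fun t _ => by ring_nf
  have hright : tailSum m (fun u => moment g P u * g (s - u)) i =
      ∑ k ∈ range (P.natDegree + 1),
        P.coeff k * tailSum m (fun u => g u * g (s + k - u)) (i + k) := by
    simp only [tailSum, moment_eq_sum_range g (Nat.lt_succ_self _), mul_sum, sum_mul]
    rw [sum_comm]
    exact sum_congr rfl fun k _ => sum_congr rfl fun t _ => by ring_nf
  rw [hleft, hright, ← sum_sub_distrib]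
  refine sum_congr rfl fun k _ => ?_
  rw [tailSum_eq_sum_range_add (fun u hu => by rw [hg u hu, zero_mul]) hi k]
  ring

theorem sum_coeff_mul_sum_range (P : R[X]) (G : ℕ → ℕ → R) :
    ∑ k ∈ range (P.natDegree + 1), P.coeff k * ∑ t ∈ range k, G t (k - 1 - t) =
      ∑ u ∈ range P.natDegree, ∑ v ∈ range P.natDegree, P.coeff (u + v + 1) * G u v := by
  rw [sum_range_succ', range_zero, sum_empty, mul_zero, add_zero]
  calc ∑ k ∈ range P.natDegree, P.coeff (k + 1) * ∑ t ∈ range (k + 1), G t (k + 1 - 1 - t)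
      = ∑ k ∈ range P.natDegree, ∑ t ∈ range (k + 1),
          P.coeff (t + (k - t) + 1) * G t (k - t) := by
        refine sum_congr rfl fun k _ => ?_
        rw [mul_sum]
        refine sum_congr rfl fun t ht => ?_
        rw [Nat.add_sub_cancel, Nat.add_sub_cancel' (Nat.lt_succ_iff.mp (mem_range.mp ht))]
    _ = ∑ u ∈ range P.natDegree, ∑ v ∈ range (P.natDegree - u), P.coeff (u + v + 1) * G u v :=
        sum_range_diag_flip _ fun u v => P.coeff (u + v + 1) * G u v
    _ = _ := by
        refine sum_congr rfl fun u _ => sum_subset (range_mono (Nat.sub_le _ _)) fun v _ hv => ?_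
        rw [mem_range] at hv
        rw [coeff_eq_zero_of_natDegree_lt (by omega), zero_mul]

theorem nonnegWindows_mul_bezoutMatrix_mul_apply (g : ℤ → R) (P : R[X]) (i j : Fin P.natDegree) :
    (nonnegWindows g P.natDegree P.natDegree * bezoutMatrix P *
        nonnegWindows g P.natDegree P.natDegree) i j =
      ∑ k ∈ range (P.natDegree + 1),
        P.coeff k * ∑ t ∈ range k, g (i + t) * g (i + j - 1 + k - (i + t)) := by
  calc _ = ∑ u ∈ range P.natDegree, ∑ v ∈ range P.natDegree,
        P.coeff (u + v + 1) * (g (i + u) * g (v + j)) := by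
        simp only [mul_apply, nonnegWindows, windowMatrix, bezoutMatrix, of_apply, sum_mul]
        rw [sum_comm]
        simp only [sum_range]
        exact sum_congr rfl fun u _ => sum_congr rfl fun v _ => by ring
    _ = ∑ k ∈ range (P.natDegree + 1),
        P.coeff k * ∑ t ∈ range k, g (i + t) * g ((k - 1 - t : ℕ) + j) :=
      (sum_coeff_mul_sum_range P fun u v => g (i + u) * g (v + j)).symm
    _ = _ := by
      refine sum_congr rfl fun k _ => congr_arg _ (sum_congr rfl fun t ht => ?_)
      rw [mem_range] at ht
      congr 2
      omega

theorem windows_moment_sub_transpose {g : ℤ → R} {m : ℕ} (hg : ∀ u, (m : ℤ) ≤ u → g u = 0)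
    {P : R[X]} (hP : ∀ i : Fin P.natDegree, moment g P i = 0) :
    (nonnegWindows g m P.natDegree)ᵀ * negWindows (moment g P) m P.natDegree -
        ((nonnegWindows (moment g P) m P.natDegree)ᵀ * negWindows g m P.natDegree)ᵀ =
      nonnegWindows g P.natDegree P.natDegree * bezoutMatrix P *
        nonnegWindows g P.natDegree P.natDegree := by
  ext i j
  have hshift (i : Fin P.natDegree) (s : ℤ) := tailSum_eq_tailSum_zero (m := m) (i := i)
    (F := fun u => moment g P u * g (s - u))
    (fun u hu => by rw [moment_eq_zero_of_le hg P hu, zero_mul])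
    (fun u hu => by rw [hP ⟨u, hu⟩, zero_mul]) i.isLt.le
  rw [nonnegWindows_mul_bezoutMatrix_mul_apply, ← tailSum_mul_moment_sub hg P (by omega),
    Matrix.sub_apply, transpose_apply, nonnegWindows_transpose_mul_negWindows_apply,
    nonnegWindows_transpose_mul_negWindows_apply, add_comm (j : ℤ), hshift i, hshift j]

theorem isSymm_windows_moment {g : ℤ → R} {m : ℕ} (hg : ∀ u, (m : ℤ) ≤ u → g u = 0)
    {P : R[X]} (hP : ∀ i : Fin P.natDegree, moment g P i = 0) :
    ((nonnegWindows (moment g P) m P.natDegree)ᵀ *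
        negWindows (moment g P) m P.natDegree).IsSymm := by
  refine IsSymm.ext fun i j => ?_
  have hshift (i : Fin P.natDegree) (s : ℤ) := tailSum_eq_tailSum_zero (m := m) (i := i)
    (F := fun u => moment g P u * moment g P (s - u))
    (fun u hu => by rw [moment_eq_zero_of_le hg P hu, zero_mul])
    (fun u hu => by rw [hP ⟨u, hu⟩, zero_mul]) i.isLt.le
  rw [nonnegWindows_transpose_mul_negWindows_apply, nonnegWindows_transpose_mul_negWindows_apply,
    add_comm (j : ℤ), hshift i, hshift j]

theorem pfaffianSum_wideWindowMatrix {g : ℤ → R} {m : ℕ} (hg : ∀ u, (m : ℤ) ≤ u → g u = 0)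
    {P : R[X]} (hmonic : P.Monic) (hP : ∀ i : Fin P.natDegree, moment g P i = 0) :
    pfaffianSum ((wideWindowMatrix g (fun t : Fin m => (t : ℤ)) P.natDegree)ᵀ *
        wideWindowMatrix g (fun t : Fin m => -1 - (t : ℤ)) P.natDegree) =
      P.natDegree.factorial • ((Perm.sign (Fin.revPerm : Perm (Fin P.natDegree)) : R) *
        (nonnegWindows g P.natDegree P.natDegree).det ^ 2) := by
  set U := shiftBasisMatrix P
  set A := wideWindowMatrix g (fun t : Fin m => (t : ℤ)) P.natDegree with hA
  set C := wideWindowMatrix g (fun t : Fin m => -1 - (t : ℤ)) P.natDegree with hC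
  calc pfaffianSum (Aᵀ * C) = pfaffianSum ((A * U)ᵀ * (C * U)) := by
        rw [← mul_one (pfaffianSum (Aᵀ * C)), ← det_shiftBasisMatrix hmonic,
          ← pfaffianSum_transpose_mul_mul, transpose_mul, Matrix.mul_assoc, Matrix.mul_assoc,
          Matrix.mul_assoc]
    _ = _ := by
        rw [hA, hC, wideWindowMatrix_mul_shiftBasisMatrix, wideWindowMatrix_mul_shiftBasisMatrix,
          transpose_fromCols, fromRows_mul_fromCols,
          pfaffianSum_fromBlocks_of_isSymm _ _ _ (isSymm_windows_moment hg hP),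
          windows_moment_sub_transpose hg hP, det_mul, det_mul, det_bezoutMatrix hmonic,
          Fintype.card_fin]
        ring

theorem sum_det_fromRows_wideWindowMatrix {K : Type*} [Field K] [CharZero K] {g : ℤ → K} {m n : ℕ}
    (hg : ∀ u, (m : ℤ) ≤ u → g u = 0) (hdet : (nonnegWindows g n n).det ≠ 0) :
    ∑ k : Fin n ↪o Fin m, (fromRows (wideWindowMatrix g (fun r => (k r : ℤ)) n)
        (wideWindowMatrix g (fun r => -1 - (k r : ℤ)) n)).det =
      Perm.sign (Fin.revPerm : Perm (Fin n)) * (nonnegWindows g n n).det ^ 2 := by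
  obtain ⟨P, hmonic, rfl, hP⟩ := exists_monic_moment_eq_zero hdet
  refine smul_right_injective K (Nat.factorial_ne_zero P.natDegree) ?_
  dsimp only
  rw [← pfaffianSum_wideWindowMatrix hg hmonic hP, pfaffianSum_transpose_mul,
    sum_eq_factorial_smul_sum_orderEmbedding]
  · rfl
  · exact fun k σ => det_fromRows_submatrix_comp_perm _ _ k σ
  · exact fun k hk => det_fromRows_submatrix_eq_zero _ _ hk

end Bezout

section JacobiTrudi

variable {R : Type*} [CommRing R] {n m N M : ℕ}

/-- The Jacobi–Trudi matrix of the partition whose part number `i`, in increasing order,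
is `l i - i`, with `h` in the role of the complete homogeneous symmetric functions. -/
def jacobiTrudiMatrix (h : ℤ → R) (l : Fin N → Fin M) : Matrix (Fin N) (Fin N) R :=
  of fun i j => h (l i - j)

/-- A family of `N` positions among `M`, read backwards. For increasing `l` it encodes the
complement of the partition of `l` in the rectangle with `N` rows of length `M - N`. -/
def reflectPositions (l : Fin N → Fin M) : Fin N → Fin M :=
  Fin.rev ∘ l ∘ Fin.rev

theorem reflectPositions_apply (l : Fin N → Fin M) (i : Fin N) :
    reflectPositions l i = (l i.rev).rev :=
  rfl

theorem reflectPositions_involutive :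
    Function.Involutive (reflectPositions : (Fin N → Fin M) → Fin N → Fin M) :=
  fun l => funext fun i => by simp only [reflectPositions_apply, Fin.rev_rev]

/-- The family fixed by `reflectPositions` whose upper half is `k`. -/
def symmPositions (k : Fin n → Fin m) : Fin (n + n) → Fin (m + m) :=
  Fin.append (fun r => Fin.castAdd m (k r.rev).rev) (fun r => Fin.natAdd m (k r))

theorem det_fromRows_wideWindowMatrix (h : ℤ → R) (k : Fin n → Fin m) :
    (fromRows (wideWindowMatrix (fun u => h (m - 1 - u)) (fun r => (k r : ℤ)) n)
        (wideWindowMatrix (fun u => h (m - 1 - u)) (fun r => -1 - (k r : ℤ)) n)).det =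
      Perm.sign (Fin.revPerm : Perm (Fin n)) * (jacobiTrudiMatrix h (symmPositions k)).det := by
  have hrows : fromRows (wideWindowMatrix (fun u => h (m - 1 - u)) (fun r => (k r : ℤ)) n)
        (wideWindowMatrix (fun u => h (m - 1 - u)) (fun r => -1 - (k r : ℤ)) n) =
      ((jacobiTrudiMatrix h (symmPositions k)).submatrix finSumFinEquiv finSumFinEquiv).submatrix
        (sumCongr Fin.revPerm 1) id := by
    ext (i | i) (j | j) <;>
      simp only [wideWindowMatrix, windowMatrix, jacobiTrudiMatrix, symmPositions,
        fromRows_apply_inl, fromRows_apply_inr, fromCols_apply_inl, fromCols_apply_inr, of_apply,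
        submatrix_apply, id, Equiv.sumCongr_apply, Sum.map_inl, Sum.map_inr, Fin.revPerm_apply,
        Perm.coe_one, finSumFinEquiv_apply_left, finSumFinEquiv_apply_right, Fin.append_left,
        Fin.append_right, Fin.rev_rev, Fin.val_castAdd, Fin.val_natAdd, Fin.val_rev] <;>
      congr 1 <;> omega
  rw [hrows, det_permute, det_submatrix_equiv_self, Perm.sign_sumCongr, Perm.sign_one, mul_one]

theorem det_nonnegWindows (h : ℤ → R) (hnm : n ≤ m) :
    (nonnegWindows (fun u => h (m - 1 - u)) n n).det =
      Perm.sign (Fin.revPerm : Perm (Fin n)) *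
        (jacobiTrudiMatrix h (reflectPositions (Fin.castLE hnm))).det := by
  have hrows : nonnegWindows (fun u => h (m - 1 - u)) n n =
      (jacobiTrudiMatrix h (reflectPositions (Fin.castLE hnm))).submatrix Fin.revPerm id := by
    ext i j
    simp only [nonnegWindows, windowMatrix, jacobiTrudiMatrix, of_apply, submatrix_apply, id,
      reflectPositions_apply, Fin.revPerm_apply, Fin.val_rev, Fin.val_castLE]
    congr 1
    omega
  rw [hrows, det_permute]

theorem sum_det_jacobiTrudiMatrix_symmPositions {K : Type*} [Field K] [CharZero K] {h : ℤ → K}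
    (hneg : ∀ u < 0, h u = 0) (hnm : n ≤ m)
    (hdet : (jacobiTrudiMatrix h (reflectPositions (Fin.castLE hnm))).det ≠ 0) :
    ∑ k : Fin n ↪o Fin m, (jacobiTrudiMatrix h (symmPositions k)).det =
      (jacobiTrudiMatrix h (reflectPositions (Fin.castLE hnm))).det ^ 2 := by
  set ε : K := ((Perm.sign (Fin.revPerm : Perm (Fin n)) : ℤ) : K)
  have hε : ε * ε = 1 := by
    simp only [ε, ← Int.cast_mul, Int.units_coe_mul_self, Int.cast_one]
  have hε₀ : ε ≠ 0 := left_ne_zero_of_mul_eq_one hε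
  have hsum := sum_det_fromRows_wideWindowMatrix (g := fun u => h (m - 1 - u)) (m := m) (n := n)
    (fun u hu => hneg _ (by omega)) (by rw [det_nonnegWindows h hnm]; exact mul_ne_zero hε₀ hdet)
  simp only [det_fromRows_wideWindowMatrix, det_nonnegWindows h hnm, ← mul_sum] at hsum
  rw [mul_left_cancel₀ hε₀ hsum, mul_pow, sq ε, hε, one_mul]

end JacobiTrudi

section SymmPositions

variable {n m : ℕ}

theorem symmPositions_castAdd (k : Fin n → Fin m) (r : Fin n) :
    symmPositions k (Fin.castAdd n r) = Fin.castAdd m (k r.rev).rev :=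
  Fin.append_left _ _ r

theorem symmPositions_natAdd (k : Fin n → Fin m) (r : Fin n) :
    symmPositions k (Fin.natAdd n r) = Fin.natAdd m (k r) :=
  Fin.append_right _ _ r

theorem rev_castAdd_self (r : Fin n) : (Fin.castAdd n r).rev = Fin.natAdd n r.rev := by
  ext
  simp only [Fin.val_rev, Fin.val_castAdd, Fin.val_natAdd]
  omega

theorem rev_natAdd_self (r : Fin n) : (Fin.natAdd n r).rev = Fin.castAdd n r.rev := by
  rw [← Fin.rev_rev r, ← rev_castAdd_self, Fin.rev_rev, Fin.rev_rev]

theorem castAdd_lt_natAdd (i : Fin n) (j : Fin m) : Fin.castAdd m i < Fin.natAdd n j :=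
  i.2.trans_le (Nat.le_add_right n j)

theorem reflectPositions_symmPositions (k : Fin n → Fin m) :
    reflectPositions (symmPositions k) = symmPositions k := by
  funext i
  induction i using Fin.addCases with
  | left r =>
    rw [reflectPositions_apply, rev_castAdd_self, symmPositions_natAdd, rev_natAdd_self,
      symmPositions_castAdd]
  | right r =>
    rw [reflectPositions_apply, rev_natAdd_self, symmPositions_castAdd, rev_castAdd_self,
      symmPositions_natAdd, Fin.rev_rev, Fin.rev_rev]

theorem symmPositions_injective :
    Function.Injective (symmPositions : (Fin n → Fin m) → Fin (n + n) → Fin (m + m)) :=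
  fun k k' h => funext fun r => by
    simpa only [symmPositions_natAdd, Fin.natAdd_inj] using congr_fun h (Fin.natAdd n r)

theorem strictMono_symmPositions {k : Fin n → Fin m} (hk : StrictMono k) :
    StrictMono (symmPositions k) := by
  intro i j hij
  induction i using Fin.addCases with
  | left r =>
    induction j using Fin.addCases with
    | left s =>
      rw [symmPositions_castAdd, symmPositions_castAdd]
      exact Fin.rev_lt_rev.mpr (hk (Fin.rev_lt_rev.mpr hij))
    | right s =>
      rw [symmPositions_castAdd, symmPositions_natAdd]
      exact castAdd_lt_natAdd _ _
  | right r =>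
    induction j using Fin.addCases with
    | left s => exact absurd hij (castAdd_lt_natAdd s r).not_gt
    | right s =>
      rw [symmPositions_natAdd, symmPositions_natAdd]
      exact (Fin.natAdd_lt_natAdd_iff _).mpr (hk ((Fin.natAdd_lt_natAdd_iff _).mp hij))

theorem le_apply_natAdd_of_reflectPositions_eq {l : Fin (n + n) → Fin (m + m)} (hl : StrictMono l)
    (hsymm : reflectPositions l = l) (r : Fin n) : m ≤ (l (Fin.natAdd n r) : ℕ) := by
  have hrev : (l (Fin.castAdd n r.rev)).rev = l (Fin.natAdd n r) := by
    rw [← rev_natAdd_self, ← reflectPositions_apply, hsymm]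
  have hlt : l (Fin.castAdd n r.rev) < l (Fin.natAdd n r) := hl (castAdd_lt_natAdd _ _)
  rw [← hrev, Fin.lt_def, Fin.val_rev] at hlt
  rw [← hrev, Fin.val_rev]
  omega

theorem exists_symmPositions_eq {l : Fin (n + n) → Fin (m + m)} (hl : StrictMono l)
    (hsymm : reflectPositions l = l) : ∃ k : Fin n ↪o Fin m, symmPositions k = l := by
  have hle := le_apply_natAdd_of_reflectPositions_eq hl hsymm
  let k (r : Fin n) : Fin m := Fin.subNat m (l (Fin.natAdd n r)) (hle r)
  have hk (r : Fin n) : symmPositions k (Fin.natAdd n r) = l (Fin.natAdd n r) := by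
    rw [symmPositions_natAdd, Fin.ext_iff, Fin.val_natAdd, Fin.val_subNat,
      Nat.add_sub_cancel' (hle r)]
  have hkmono : StrictMono k := fun r s hrs => by
    rw [← Fin.natAdd_lt_natAdd_iff m, ← symmPositions_natAdd, ← symmPositions_natAdd, hk, hk]
    exact hl ((Fin.natAdd_lt_natAdd_iff _).mpr hrs)
  refine ⟨OrderEmbedding.ofStrictMono k hkmono, funext fun i => ?_⟩
  rw [OrderEmbedding.coe_ofStrictMono]
  induction i using Fin.addCases with
  | left r =>
    rw [← hsymm, ← reflectPositions_symmPositions, reflectPositions_apply, reflectPositions_apply,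
      rev_castAdd_self, hk]
  | right r => exact hk r

end SymmPositions

section Chains

variable {α : Type*} {r : α → α → Prop} {x₀ l : α} {n : ℕ}

/-- The `r`-chains with `n` steps from `x₀` to `l`, continued by the constant value `l` so that they
are determined by their values up to `n`. -/
def chains (r : α → α → Prop) (n : ℕ) (x₀ l : α) : Set (ℕ → α) :=
  {X | X 0 = x₀ ∧ (∀ t < n, r (X t) (X (t + 1))) ∧ ∀ t, n ≤ t → X t = l}

instance [Finite α] : Finite (chains r n x₀ l) := by
  refine Finite.of_injective (fun X (t : Fin (n + 1)) => X.1 t) fun X Y h => ?_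
  refine Subtype.ext (funext fun t => ?_)
  rcases lt_or_ge t n with ht | ht
  · exact congr_fun h ⟨t, ht.trans n.lt_succ_self⟩
  · rw [X.2.2.2 t ht, Y.2.2.2 t ht]

theorem card_chains_zero [DecidableEq α] :
    Nat.card (chains r 0 x₀ l) = if x₀ = l then 1 else 0 := by
  split_ifs with h
  · subst h
    have hconst : chains r 0 x₀ x₀ = {fun _ => x₀} := by
      ext X
      simp only [chains, Set.mem_ofPred_eq, Nat.not_lt_zero, IsEmpty.forall_iff, implies_true,
        true_and, zero_le, forall_const, Set.mem_singleton_iff, funext_iff]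
      exact and_iff_right_of_imp fun hX => hX 0
    rw [hconst, Nat.card_unique]
  · have hempty : IsEmpty (chains r 0 x₀ l) :=
      ⟨fun X => h (X.2.1.symm.trans (X.2.2.2 0 le_rfl))⟩
    exact Nat.card_of_isEmpty

theorem chains_ext {X Y : ℕ → α} {q q' : α} (hX : X ∈ chains r n x₀ q) (hY : Y ∈ chains r n x₀ q')
    (h : ∀ t ≤ n, X t = Y t) : X = Y := by
  funext t
  rcases le_total t n with ht | ht
  · exact h t ht
  · rw [hX.2.2 t ht, ← hX.2.2 n le_rfl, h n le_rfl, hY.2.2 n le_rfl, hY.2.2 t ht]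

theorem truncate_mem_chains {X : ℕ → α} {m : ℕ} (hX : X ∈ chains r m x₀ l) (hnm : n ≤ m) :
    (fun t => X (min t n)) ∈ chains r n x₀ (X n) := by
  refine ⟨?_, fun t ht => ?_, fun t ht => ?_⟩ <;> dsimp only
  · rw [Nat.zero_min, hX.1]
  · rw [min_eq_left ht.le, min_eq_left (Nat.succ_le_of_lt ht)]
    exact hX.2.1 t (ht.trans_le hnm)
  · rw [min_eq_right ht]

theorem card_eq_sum_card_chains [Finite α] {S : Set (ℕ → α)} {s : Finset α}
    (extend : (ℕ → α) → ℕ → α) (hextend : ∀ Y, ∀ t ≤ n, extend Y t = Y t)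
    (hmem : ∀ q ∈ s, ∀ Y ∈ chains r n x₀ q, extend Y ∈ S)
    (htruncate : ∀ X ∈ S, X n ∈ s ∧ (fun t => X (min t n)) ∈ chains r n x₀ (X n) ∧
      extend (fun t => X (min t n)) = X) :
    Nat.card S = ∑ q ∈ s, Nat.card (chains r n x₀ q) := by
  let f (Y : Σ q : s, chains r n x₀ (q : α)) : S := ⟨extend Y.2, hmem _ Y.1.2 _ Y.2.2⟩
  have hf : Function.Bijective f := by
    refine ⟨?_, fun X => ?_⟩
    · rintro ⟨⟨q, hq⟩, Y, hY⟩ ⟨⟨q', hq'⟩, Y', hY'⟩ h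
      obtain rfl : Y = Y' := chains_ext hY hY' fun t ht => by
        rw [← hextend Y t ht, ← hextend Y' t ht]
        exact congr_fun (congr_arg Subtype.val h) t
      obtain rfl : q = q' := (hY.2.2 n le_rfl).symm.trans (hY'.2.2 n le_rfl)
      rfl
    · obtain ⟨hs, hchain, hX⟩ := htruncate X X.2
      exact ⟨⟨⟨_, hs⟩, _, hchain⟩, Subtype.ext hX⟩
  rw [← Nat.card_eq_of_bijective f hf, Nat.card_sigma, sum_coe_sort s fun q =>
    Nat.card (chains r n x₀ q)]

theorem card_chains_succ [Finite α] {s : Finset α} (hs : ∀ q, q ∈ s ↔ r q l) :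
    Nat.card (chains r (n + 1) x₀ l) = ∑ q ∈ s, Nat.card (chains r n x₀ q) := by
  refine card_eq_sum_card_chains (fun Y t => if t ≤ n then Y t else l) (fun Y t ht => if_pos ht)
    (fun q hq Y hY => ⟨?_, fun t ht => ?_, fun t ht => if_neg (by omega)⟩)
    (fun X hX => ⟨?_, truncate_mem_chains hX n.le_succ, funext fun t => ?_⟩)
  · exact (if_pos n.zero_le).trans hY.1
  · dsimp only
    rcases (Nat.lt_succ_iff.mp ht).lt_or_eq with ht | rfl
    · rw [if_pos ht.le, if_pos (Nat.succ_le_of_lt ht)]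
      exact hY.2.1 t ht
    · rw [if_pos le_rfl, if_neg (by omega), hY.2.2 t le_rfl]
      exact (hs q).mp hq
  · rw [hs, ← hX.2.2 (n + 1) le_rfl]
    exact hX.2.1 n n.lt_succ_self
  · dsimp only
    split_ifs with ht
    · rw [min_eq_left ht]
    · rw [hX.2.2 t (by omega)]

/-- The first `n + 1` values of `Y`, followed by their images under `ρ` in reverse order. -/
def palindrome (ρ : α → α) (n : ℕ) (Y : ℕ → α) (t : ℕ) : α :=
  if t ≤ n then Y t else ρ (Y (n + n - t))

theorem palindrome_of_ge {ρ : α → α} {Y : ℕ → α} (hY : ρ (Y n) = Y n) {t : ℕ} (ht : n ≤ t) :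
    palindrome ρ n Y t = ρ (Y (n + n - t)) := by
  rcases ht.eq_or_lt with rfl | ht
  · rw [palindrome, if_pos le_rfl, Nat.add_sub_cancel, hY]
  · exact if_neg (not_le.mpr ht)

theorem palindrome_sub {ρ : α → α} (hρ : Function.Involutive ρ) {Y : ℕ → α} (hY : ρ (Y n) = Y n)
    {t : ℕ} (ht : t ≤ n + n) : palindrome ρ n Y (n + n - t) = ρ (palindrome ρ n Y t) := by
  rcases le_total t n with htn | htn
  · rw [palindrome_of_ge hY (by omega), Nat.sub_sub_self ht, palindrome, if_pos htn]
  · rw [palindrome_of_ge hY htn, hρ, palindrome, if_pos (by omega)]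

theorem palindrome_mem_chains {ρ : α → α} (hr : ∀ q l, r q l → r (ρ l) (ρ q)) {Y : ℕ → α}
    (hY : Y ∈ chains r n x₀ l) (hl : ρ l = l) :
    palindrome ρ n Y ∈ chains r (n + n) x₀ (ρ x₀) := by
  have hYn : ρ (Y n) = Y n := by rw [hY.2.2 n le_rfl, hl]
  refine ⟨(if_pos n.zero_le).trans hY.1, fun t ht => ?_, fun t ht => ?_⟩
  · rcases lt_or_ge t n with htn | htn
    · rw [palindrome, if_pos htn.le, palindrome, if_pos (Nat.succ_le_of_lt htn)]
      exact hY.2.1 t htn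
    · rw [palindrome_of_ge hYn htn, palindrome_of_ge hYn (by omega),
        (by omega : n + n - t = n + n - (t + 1) + 1)]
      exact hr _ _ (hY.2.1 _ (by omega))
  · rw [palindrome_of_ge hYn (by omega), Nat.sub_eq_zero_of_le ht, hY.1]

theorem card_palindromic_chains [Finite α] {ρ : α → α} (hρ : Function.Involutive ρ)
    (hr : ∀ q l, r q l → r (ρ l) (ρ q)) {s : Finset α} (hs : ∀ q, q ∈ s ↔ ρ q = q) :
    Nat.card {X : ℕ → α // X ∈ chains r (n + n) x₀ (ρ x₀) ∧
        ∀ t ≤ n + n, X (n + n - t) = ρ (X t)} =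
      ∑ q ∈ s, Nat.card (chains r n x₀ q) := by
  refine card_eq_sum_card_chains
    (S := {X | X ∈ chains r (n + n) x₀ (ρ x₀) ∧ ∀ t ≤ n + n, X (n + n - t) = ρ (X t)})
    (palindrome ρ n) (fun Y t ht => if_pos ht) (fun q hq Y hY => ?_) (fun X hX => ?_)
  · have hYn : ρ (Y n) = Y n := by rw [hY.2.2 n le_rfl, (hs q).mp hq]
    exact ⟨palindrome_mem_chains hr hY ((hs q).mp hq), fun t ht => palindrome_sub hρ hYn ht⟩
  · have hXn : ρ (X n) = X n := by rw [← hX.2 n (by omega), Nat.add_sub_cancel]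
    refine ⟨(hs _).mpr hXn, truncate_mem_chains hX.1 (by omega), funext fun t => ?_⟩
    rw [palindrome]
    split_ifs with ht
    · rw [min_eq_left ht]
    · rw [min_eq_left (by omega)]
      rcases le_total t (n + n) with htn | htn
      · rw [hX.2 t htn, hρ]
      · rw [hX.1.2.2 t htn, Nat.sub_eq_zero_of_le htn, hX.1.1]

end Chains

section Interlacing

/-- The complete homogeneous symmetric polynomial of degree `k` evaluated at `n` ones,
which is `0` in negative degrees. -/
def completeHom (n : ℕ) (k : ℤ) : ℚ :=
  if k < 0 then 0 else n.multichoose k.toNat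

theorem completeHom_natCast (n d : ℕ) : completeHom n d = n.multichoose d := by
  rw [completeHom, if_neg (by omega), Int.toNat_natCast]

theorem completeHom_of_neg {n : ℕ} {k : ℤ} (hk : k < 0) : completeHom n k = 0 :=
  if_pos hk

theorem completeHom_zero (k : ℤ) : completeHom 0 k = if k = 0 then 1 else 0 := by
  rcases lt_trichotomy k 0 with hk | rfl | hk
  · rw [completeHom_of_neg hk, if_neg hk.ne]
  · simp [completeHom]
  · lift k to ℕ using hk.le
    obtain ⟨d, rfl⟩ := Nat.exists_eq_succ_of_ne_zero (by omega : k ≠ 0)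
    rw [completeHom_natCast, Nat.multichoose_zero_succ, Nat.cast_zero, if_neg hk.ne']

theorem completeHom_succ (n : ℕ) (k : ℤ) :
    completeHom (n + 1) k = completeHom (n + 1) (k - 1) + completeHom n k := by
  rcases lt_trichotomy k 0 with hk | rfl | hk
  · rw [completeHom_of_neg hk, completeHom_of_neg hk, completeHom_of_neg (by omega), add_zero]
  · simp [completeHom]
  · lift k to ℕ using hk.le
    obtain ⟨d, rfl⟩ := Nat.exists_eq_succ_of_ne_zero (by omega : k ≠ 0)
    rw [Nat.cast_succ, add_sub_cancel_right, ← Nat.cast_succ]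
    simp only [completeHom_natCast, Nat.multichoose_succ_succ, Nat.cast_add, add_comm]

theorem sum_range_completeHom (n j y : ℕ) :
    ∑ q ∈ range (y + 1), completeHom n (q - j) = completeHom (n + 1) (y - j) := by
  induction y with
  | zero =>
    rw [sum_range_one, completeHom_succ, completeHom_of_neg (k := _ - _ - 1) (by omega), zero_add]
  | succ y ih =>
    rw [sum_range_succ, ih, completeHom_succ n ((y + 1 : ℕ) - j), Nat.cast_succ,
      add_sub_right_comm, add_sub_cancel_right]

variable {N M : ℕ}

theorem sum_Iic_completeHom (n j : ℕ) (y : Fin M) :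
    ∑ q ∈ Iic y, completeHom n (q - j) = completeHom (n + 1) (y - j) := by
  rw [← sum_range_completeHom, Nat.range_succ_eq_Iic, ← Fin.map_valEmbedding_Iic, sum_map]
  rfl

theorem sum_Ioc_completeHom (n j : ℕ) {x y : Fin M} (hxy : x ≤ y) :
    ∑ q ∈ Ioc x y, completeHom n (q - j) =
      completeHom (n + 1) (y - j) - completeHom (n + 1) (x - j) := by
  rw [← sum_Iic_completeHom, ← sum_Iic_completeHom, ← Iic_sdiff_Ioc_self_of_le hxy,
    sum_sdiff_eq_sub Ioc_subset_Iic_self, sub_sub_cancel]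

/-- The positions `q` and `l` satisfy `q 0 ≤ l 0 < q 1 ≤ l 1 < q 2 ≤ ⋯`: the partition of `l` is
obtained from that of `q` by adding a horizontal strip. -/
def Interlaces (q l : Fin N → Fin M) : Prop :=
  (∀ i, q i ≤ l i) ∧ ∀ i j : Fin N, (i : ℕ) + 1 = j → l i < q j

theorem Interlaces.strictMono_right {q l : Fin N → Fin M} (h : Interlaces q l) : StrictMono l := by
  cases N with
  | zero => exact Subsingleton.strictMono l
  | succ N =>
    exact Fin.strictMono_iff_lt_succ.mpr fun i =>
      (h.2 i.castSucc i.succ rfl).trans_le (h.1 i.succ)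

theorem Interlaces.strictMono_left {q l : Fin N → Fin M} (h : Interlaces q l) : StrictMono q := by
  cases N with
  | zero => exact Subsingleton.strictMono q
  | succ N =>
    exact Fin.strictMono_iff_lt_succ.mpr fun i =>
      (h.1 i.castSucc).trans_lt (h.2 i.castSucc i.succ rfl)

theorem Interlaces.reflectPositions {q l : Fin N → Fin M} (h : Interlaces q l) :
    Interlaces (reflectPositions l) (reflectPositions q) := by
  refine ⟨fun i => Fin.rev_le_rev.mpr (h.1 i.rev), fun i j hij => Fin.rev_lt_rev.mpr (h.2 _ _ ?_)⟩
  rw [Fin.val_rev, Fin.val_rev]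
  omega

theorem strictMono_of_mem_chains {n : ℕ} {l x₀ : Fin N → Fin M} (hx₀ : StrictMono x₀)
    {X : ℕ → Fin N → Fin M} (hX : X ∈ chains Interlaces n x₀ l) : StrictMono l := by
  rw [← hX.2.2 n le_rfl]
  cases n with
  | zero => rwa [hX.1]
  | succ n => exact (hX.2.1 n n.lt_succ_self).strictMono_right

/-- The values allowed in place `i` of a family that interlaces with `l`. -/
def interlacingRange (l : Fin N → Fin M) (i : Fin N) : Finset (Fin M) :=
  {x | x ≤ l i ∧ ∀ j : Fin N, (j : ℕ) + 1 = i → l j < x}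

theorem mem_piFinset_interlacingRange {q l : Fin N → Fin M} :
    q ∈ Fintype.piFinset (interlacingRange l) ↔ Interlaces q l := by
  simp only [Fintype.mem_piFinset, interlacingRange, mem_filter_univ, forall_and, Interlaces]
  exact and_congr_right' forall_comm

theorem interlacingRange_zero (l : Fin (N + 1) → Fin M) : interlacingRange l 0 = Iic (l 0) := by
  ext x
  simp [interlacingRange]

theorem interlacingRange_succ (l : Fin (N + 1) → Fin M) (i : Fin N) :
    interlacingRange l i.succ = Ioc (l i.castSucc) (l i.succ) := by
  ext x
  have hpred (j : Fin (N + 1)) : (j : ℕ) + 1 = i.succ ↔ j = i.castSucc := by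
    rw [Fin.ext_iff, Fin.val_succ, Fin.val_castSucc, Nat.add_right_cancel_iff]
  simp only [interlacingRange, mem_filter_univ, mem_Ioc, hpred, forall_eq, and_comm]

theorem det_sum_piFinset {R ι κ : Type*} [CommRing R] [Fintype ι] [DecidableEq ι]
    (f : κ → ι → R) (s : ι → Finset κ) :
    (of fun i j => ∑ q ∈ s i, f q j).det =
      ∑ q ∈ Fintype.piFinset s, (of fun i => f (q i)).det := by
  refine Eq.trans (congr_arg det ?_)
    ((detRowAlternating (R := R) (n := ι)).toMultilinearMap.map_sum_finset (fun _ => f) s)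
  ext i j
  rw [of_apply, Finset.sum_apply]

theorem det_jacobiTrudiMatrix_completeHom_succ (n : ℕ) {l : Fin N → Fin M} (hl : StrictMono l) :
    (jacobiTrudiMatrix (completeHom (n + 1)) l).det =
      ∑ q ∈ Fintype.piFinset (interlacingRange l), (jacobiTrudiMatrix (completeHom n) q).det := by
  refine Eq.trans ?_
    (det_sum_piFinset (fun (q : Fin M) (j : Fin N) => completeHom n (q - j)) (interlacingRange l))
  cases N with
  | zero => rw [det_isEmpty, det_isEmpty]
  | succ N =>
    refine det_eq_of_forall_row_eq_smul_add_pred (fun _ => 1) (fun j => ?_) fun i j => ?_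
    · rw [of_apply, interlacingRange_zero, sum_Iic_completeHom]
      rfl
    · rw [of_apply, interlacingRange_succ, sum_Ioc_completeHom _ _ (hl.monotone i.castSucc_le_succ),
        one_mul]
      exact (sub_add_cancel _ _).symm

theorem val_le_of_strictMono {l : Fin N → Fin M} (hl : StrictMono l) (i : Fin N) :
    (i : ℕ) ≤ l i := by
  simpa only [Fin.card_Iio] using card_le_card_of_injOn l
    (fun j hj => mem_Iio.mpr (hl (mem_Iio.mp hj))) hl.injective.injOn

theorem det_jacobiTrudiMatrix_completeHom_zero (hNM : N ≤ M) {l : Fin N → Fin M}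
    (hl : StrictMono l) :
    (jacobiTrudiMatrix (completeHom 0) l).det = if Fin.castLE hNM = l then 1 else 0 := by
  have happly (i j : Fin N) :
      jacobiTrudiMatrix (completeHom 0) l i j = if (l i : ℕ) = j then 1 else 0 := by
    rw [jacobiTrudiMatrix, of_apply, completeHom_zero]
    simp only [sub_eq_zero, Nat.cast_inj]
  have htriang : (jacobiTrudiMatrix (completeHom 0) l).IsUpperTriangular := fun i j hij => by
    rw [happly, if_neg]
    exact ((Fin.lt_def.mp hij).trans_le (val_le_of_strictMono hl i)).ne'
  rw [det_of_isUpperTriangular htriang]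
  simp only [happly, Finset.prod_ite_zero, prod_const_one, mem_univ, forall_const, funext_iff,
    Fin.ext_iff, Fin.val_castLE, eq_comm]

theorem card_chains_interlaces (n : ℕ) (hNM : N ≤ M) {l : Fin N → Fin M} (hl : StrictMono l) :
    (Nat.card (chains Interlaces n (Fin.castLE hNM) l) : ℚ) =
      (jacobiTrudiMatrix (completeHom n) l).det := by
  induction n generalizing l with
  | zero =>
    rw [card_chains_zero, det_jacobiTrudiMatrix_completeHom_zero hNM hl, Nat.cast_ite, Nat.cast_one,
      Nat.cast_zero]
  | succ n ih =>
    rw [card_chains_succ fun _ => mem_piFinset_interlacingRange, Nat.cast_sum,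
      det_jacobiTrudiMatrix_completeHom_succ n hl]
    exact sum_congr rfl fun q hq => ih (mem_piFinset_interlacingRange.mp hq).strictMono_left

end Interlacing

section PlanePartitions

variable {A B C M : ℕ}

/-- The complements `C - P (i, j)` in row `i`, placed at `u = A + j` and extended by `0` to the left
and by `C` to the right, so that they increase with `i` and `u`. -/
def paddedHeight (P : Fin A × Fin B → Fin (C + 1)) (i : Fin A) (u : ℕ) : ℕ :=
  if u < A then 0 else if h : u - A < B then C - P (i, ⟨u - A, h⟩) else C

theorem paddedHeight_of_lt (P : Fin A × Fin B → Fin (C + 1)) (i : Fin A) {u : ℕ} (hu : u < A) :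
    paddedHeight P i u = 0 :=
  if_pos hu

theorem paddedHeight_of_ge (P : Fin A × Fin B → Fin (C + 1)) (i : Fin A) {u : ℕ}
    (hu : A + B ≤ u) : paddedHeight P i u = C := by
  rw [paddedHeight, if_neg (by omega), dif_neg (by omega)]

theorem paddedHeight_add (P : Fin A × Fin B → Fin (C + 1)) (i : Fin A) (j : Fin B) :
    paddedHeight P i (A + j) = C - P (i, j) := by
  simp only [paddedHeight, Nat.add_sub_cancel_left, Fin.is_lt, dite_true, Fin.eta,
    (Nat.le_add_right A j).not_gt, if_false]

theorem paddedHeight_le (P : Fin A × Fin B → Fin (C + 1)) (i : Fin A) (u : ℕ) :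
    paddedHeight P i u ≤ C := by
  unfold paddedHeight
  split_ifs <;> omega

theorem lt_or_exists_eq_add_or_add_le (A B u : ℕ) :
    u < A ∨ (∃ j : Fin B, u = A + j) ∨ A + B ≤ u := by
  rcases lt_or_ge u A with hu | hu
  · exact .inl hu
  · rcases lt_or_ge u (A + B) with hu' | hu'
    · exact .inr (.inl ⟨⟨u - A, by omega⟩, (Nat.add_sub_cancel' hu).symm⟩)
    · exact .inr (.inr hu')

theorem paddedHeight_le_paddedHeight {P : Fin A × Fin B → Fin (C + 1)} (hP : Antitone P)
    {i i' : Fin A} {u u' : ℕ} (hi : i ≤ i') (hu : u ≤ u') :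
    paddedHeight P i u ≤ paddedHeight P i' u' := by
  rcases lt_or_exists_eq_add_or_add_le A B u with hA | ⟨j, rfl⟩ | hB
  · rw [paddedHeight_of_lt P i hA]
    exact Nat.zero_le _
  · rcases lt_or_exists_eq_add_or_add_le A B u' with hA | ⟨j', rfl⟩ | hB
    · omega
    · rw [paddedHeight_add, paddedHeight_add]
      have hj : j ≤ j' := Nat.le_of_add_le_add_left hu
      exact Nat.sub_le_sub_left (hP (Prod.mk_le_mk.mpr ⟨hi, hj⟩)) C
    · rw [paddedHeight_of_ge P i' hB]
      exact paddedHeight_le P i _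
  · rw [paddedHeight_of_ge P i hB, paddedHeight_of_ge P i' (hB.trans hu)]

/-- The positions read off the diagonals of a plane partition: at time `t` the `i`-th of them is
`i` plus the padded height of row `i` in column `t + i`. -/
def diagonalChain (hM : A + C = M) (P : Fin A × Fin B → Fin (C + 1)) (t : ℕ) (i : Fin A) : Fin M :=
  ⟨i + paddedHeight P i (t + i), by have := paddedHeight_le P i (t + i); omega⟩

theorem val_diagonalChain (hM : A + C = M) (P : Fin A × Fin B → Fin (C + 1)) (t : ℕ) (i : Fin A) :
    (diagonalChain hM P t i : ℕ) = i + paddedHeight P i (t + i) :=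
  rfl

theorem val_diagonalChain_add_sub (hM : A + C = M) (P : Fin A × Fin B → Fin (C + 1)) (i : Fin A)
    (j : Fin B) : (diagonalChain hM P (A + j - i) i : ℕ) = i + (C - P (i, j)) := by
  rw [val_diagonalChain, Nat.sub_add_cancel (by omega), paddedHeight_add]

/-- The chains of positions that encode the plane partitions in an `A × B × C` box. They lead from
the empty partition to the rectangle with `A` rows of length `C`. -/
abbrev boxChains (B : ℕ) (hM : A + C = M) : Set (ℕ → Fin A → Fin M) :=
  chains Interlaces (A + B) (Fin.castLE (Nat.le.intro hM))
    (reflectPositions (Fin.castLE (Nat.le.intro hM)))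

theorem val_reflectPositions_castLE (hM : A + C = M) (i : Fin A) :
    (reflectPositions (Fin.castLE (Nat.le.intro hM)) i : ℕ) = i + C := by
  rw [reflectPositions_apply, Fin.val_rev, Fin.val_castLE, Fin.val_rev]
  omega

theorem diagonalChain_mem_boxChains (hM : A + C = M) {P : Fin A × Fin B → Fin (C + 1)}
    (hP : Antitone P) : diagonalChain hM P ∈ boxChains B hM := by
  refine ⟨funext fun i => Fin.ext ?_, fun t _ => ⟨fun i => ?_, fun i j hij => ?_⟩,
    fun t ht => funext fun i => Fin.ext ?_⟩
  · rw [val_diagonalChain, paddedHeight_of_lt P i (by omega), Fin.val_castLE, add_zero]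
  · rw [Fin.le_def, val_diagonalChain, val_diagonalChain]
    exact Nat.add_le_add_left (paddedHeight_le_paddedHeight hP le_rfl (by omega)) _
  · rw [Fin.lt_def, val_diagonalChain, val_diagonalChain]
    have hle : paddedHeight P i (t + 1 + i) ≤ paddedHeight P j (t + j) :=
      paddedHeight_le_paddedHeight hP (Fin.le_def.mpr (by omega)) (by omega)
    omega
  · rw [val_diagonalChain, paddedHeight_of_ge P i (by omega), val_reflectPositions_castLE hM]

section InverseMap

variable {hM : A + C = M} {X : ℕ → Fin A → Fin M}

theorem apply_mono_of_mem_boxChains (hX : X ∈ boxChains B hM) (i : Fin A) :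
    Monotone fun t => X t i := by
  refine monotone_nat_of_le_succ fun t => ?_
  rcases lt_or_ge t (A + B) with ht | ht
  · exact (hX.2.1 t ht).1 i
  · rw [hX.2.2 t ht, hX.2.2 (t + 1) (by omega)]

theorem le_apply_of_mem_boxChains (hX : X ∈ boxChains B hM) (t : ℕ) (i : Fin A) :
    (i : ℕ) ≤ X t i := by
  have hmono : X 0 i ≤ X t i := apply_mono_of_mem_boxChains hX i t.zero_le
  rwa [hX.1] at hmono

theorem apply_le_of_mem_boxChains (hX : X ∈ boxChains B hM) (t : ℕ) (i : Fin A) :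
    (X t i : ℕ) ≤ i + C := by
  have hmono : X t i ≤ X (t + (A + B)) i := apply_mono_of_mem_boxChains hX i (Nat.le_add_right t _)
  rwa [hX.2.2 (t + (A + B)) (by omega), Fin.le_def, val_reflectPositions_castLE hM] at hmono

theorem apply_add_one_lt_of_mem_boxChains (hX : X ∈ boxChains B hM) (t : ℕ) {i j : Fin A}
    (hij : (i : ℕ) + 1 = j) : X (t + 1) i < X t j := by
  rcases lt_or_ge t (A + B) with ht | ht
  · exact (hX.2.1 t ht).2 i j hij
  · rw [hX.2.2 t ht, hX.2.2 (t + 1) (by omega), Fin.lt_def, val_reflectPositions_castLE hM,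
      val_reflectPositions_castLE hM]
    omega

theorem apply_add_add_le_of_mem_boxChains (hX : X ∈ boxChains B hM) (t d : ℕ) {i j : Fin A}
    (hij : (i : ℕ) + d = j) : (X (t + d) i : ℕ) + d ≤ X t j := by
  induction d generalizing i with
  | zero =>
    obtain rfl : i = j := Fin.ext hij
    rfl
  | succ d ih =>
    have hstep : X (t + d + 1) i < X (t + d) ⟨i + 1, by omega⟩ :=
      apply_add_one_lt_of_mem_boxChains hX _ rfl
    have hrest := ih (i := ⟨i + 1, by omega⟩) (by rw [Fin.val_mk]; omega)
    rw [Fin.lt_def] at hstep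
    rw [← add_assoc t]
    omega

theorem apply_eq_of_add_lt (hX : X ∈ boxChains B hM) {t : ℕ} {i : Fin A} (h : t + i < A) :
    (X t i : ℕ) = i := by
  have hle := apply_add_add_le_of_mem_boxChains hX 0 t (i := i) (j := ⟨i + t, by omega⟩) rfl
  rw [hX.1, zero_add, Fin.val_castLE] at hle
  dsimp only at hle
  exact le_antisymm (by omega) (le_apply_of_mem_boxChains hX t i)

theorem apply_eq_of_le_add (hX : X ∈ boxChains B hM) {t : ℕ} {i : Fin A} (h : A + B ≤ t + i) :
    (X t i : ℕ) = i + C := by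
  rcases le_total (A + B) t with ht | ht
  · rw [hX.2.2 t ht, val_reflectPositions_castLE hM]
  · have hle := apply_add_add_le_of_mem_boxChains hX t (A + B - t)
      (i := ⟨i - (A + B - t), by omega⟩) (j := i) (Nat.sub_add_cancel (by omega))
    rw [hX.2.2 _ (by omega), val_reflectPositions_castLE hM, Fin.val_mk] at hle
    exact le_antisymm (apply_le_of_mem_boxChains hX t i) (by omega)

/-- The plane partition with the given chain of diagonals. -/
def ofDiagonalChain (B C : ℕ) (X : ℕ → Fin A → Fin M) (p : Fin A × Fin B) : Fin (C + 1) :=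
  Fin.ofNat (C + 1) (p.1 + C - X (A + p.2 - p.1) p.1)

theorem val_ofDiagonalChain (hX : X ∈ boxChains B hM) (p : Fin A × Fin B) :
    (ofDiagonalChain B C X p : ℕ) = p.1 + C - X (A + p.2 - p.1) p.1 := by
  have hle := le_apply_of_mem_boxChains hX (A + p.2 - p.1) p.1
  exact Nat.mod_eq_of_lt (by omega)

theorem antitone_ofDiagonalChain (hX : X ∈ boxChains B hM) : Antitone (ofDiagonalChain B C X) := by
  rintro ⟨i, j⟩ ⟨i', j'⟩ ⟨hi, hj⟩
  rw [Fin.le_def, val_ofDiagonalChain hX, val_ofDiagonalChain hX]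
  dsimp only at hi hj ⊢
  have htime : X (A + j - i) i ≤ X (A + j' - i' + (i' - i)) i :=
    apply_mono_of_mem_boxChains hX i (by omega)
  have hrow : (X (A + j' - i' + (i' - i)) i : ℕ) + (i' - i) ≤ X (A + j' - i') i' :=
    apply_add_add_le_of_mem_boxChains hX _ _ (by omega)
  omega

theorem diagonalChain_ofDiagonalChain (hX : X ∈ boxChains B hM) :
    diagonalChain hM (ofDiagonalChain B C X) = X := by
  funext t i
  refine Fin.ext ?_
  rw [val_diagonalChain]
  rcases lt_or_exists_eq_add_or_add_le A B (t + i) with h | ⟨j, h⟩ | h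
  · rw [paddedHeight_of_lt _ _ h, apply_eq_of_add_lt hX h, add_zero]
  · have hle := le_apply_of_mem_boxChains hX t i
    have hge := apply_le_of_mem_boxChains hX t i
    rw [h, paddedHeight_add, val_ofDiagonalChain hX]
    dsimp only
    rw [(by omega : A + (j : ℕ) - i = t)]
    omega
  · rw [paddedHeight_of_ge _ _ h, apply_eq_of_le_add hX h]

end InverseMap

theorem ofDiagonalChain_diagonalChain (hM : A + C = M) {P : Fin A × Fin B → Fin (C + 1)}
    (hP : Antitone P) : ofDiagonalChain B C (diagonalChain hM P) = P := by
  funext ⟨i, j⟩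
  refine Fin.ext ?_
  rw [val_ofDiagonalChain (diagonalChain_mem_boxChains hM hP), val_diagonalChain_add_sub]
  dsimp only
  omega

/-- A plane partition corresponds to its chain of diagonals. -/
def planePartitionEquiv (B : ℕ) (hM : A + C = M) :
    {P : Fin A × Fin B → Fin (C + 1) // Antitone P} ≃ boxChains B hM where
  toFun P := ⟨diagonalChain hM P.1, diagonalChain_mem_boxChains hM P.2⟩
  invFun X := ⟨ofDiagonalChain B C X.1, antitone_ofDiagonalChain X.2⟩
  left_inv P := Subtype.ext (ofDiagonalChain_diagonalChain hM P.2)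
  right_inv X := Subtype.ext (diagonalChain_ofDiagonalChain X.2)

theorem paddedHeight_add_paddedHeight_rev {P : Fin A × Fin B → Fin (C + 1)}
    (hP : ∀ p : Fin A × Fin B, (P p : ℕ) + P (p.1.rev, p.2.rev) = C) (i : Fin A) {u u' : ℕ}
    (hu : u + u' + 1 = A + B + A) : paddedHeight P i u + paddedHeight P i.rev u' = C := by
  rcases lt_or_exists_eq_add_or_add_le A B u with h | ⟨j, rfl⟩ | h
  · rw [paddedHeight_of_lt P i h, paddedHeight_of_ge P _ (by omega), zero_add]
  · have hj : u' = A + (j.rev : ℕ) := by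
      rw [Fin.val_rev]
      omega
    rw [hj, paddedHeight_add, paddedHeight_add]
    have hsum : (P (i, j) : ℕ) + P (i.rev, j.rev) = C := hP (i, j)
    omega
  · rw [paddedHeight_of_ge P i h, paddedHeight_of_lt P _ (by omega), add_zero]

theorem selfComplementary_iff_diagonalChain (hM : A + C = M) (P : Fin A × Fin B → Fin (C + 1)) :
    (∀ p : Fin A × Fin B, (P p : ℕ) + P (p.1.rev, p.2.rev) = C) ↔
      ∀ t ≤ A + B, diagonalChain hM P (A + B - t) = reflectPositions (diagonalChain hM P t) := by
  constructor
  · refine fun hP t ht => funext fun i => Fin.ext ?_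
    have hsum := paddedHeight_add_paddedHeight_rev hP i (u := A + B - t + i) (u' := t + i.rev)
      (by rw [Fin.val_rev]; omega)
    rw [reflectPositions_apply, Fin.val_rev, val_diagonalChain, val_diagonalChain]
    rw [Fin.val_rev] at hsum ⊢
    omega
  · rintro hX ⟨i, j⟩
    have hval := congr_arg Fin.val (congr_fun (hX (A + j.rev - i.rev) (by omega)) i)
    have htime : A + B - (A + (j.rev : ℕ) - i.rev) = A + j - i := by
      rw [Fin.val_rev, Fin.val_rev]
      omega
    rw [htime, reflectPositions_apply, Fin.val_rev, val_diagonalChain_add_sub,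
      val_diagonalChain_add_sub, Fin.val_rev i] at hval
    dsimp only
    omega

/-- A self-complementary plane partition corresponds to its palindromic chain of diagonals. -/
def selfComplementaryEquiv (B : ℕ) (hM : A + C = M) :
    {P : Fin A × Fin B → Fin (C + 1) // Antitone P ∧
        ∀ p : Fin A × Fin B, (P p : ℕ) + P (p.1.rev, p.2.rev) = C} ≃
      {X : ℕ → Fin A → Fin M // X ∈ boxChains B hM ∧
        ∀ t ≤ A + B, X (A + B - t) = reflectPositions (X t)} :=
  (subtypeSubtypeEquivSubtypeInter _ _).symm.trans <|
    ((planePartitionEquiv B hM).subtypeEquiv fun P =>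
      selfComplementary_iff_diagonalChain hM P.1).trans (subtypeSubtypeEquivSubtypeInter _ _)

end PlanePartitions

section Counting

variable {n m : ℕ}

theorem sum_card_chains_interlaces_symmPositions (t : ℕ) (hnm : n + n ≤ m + m) :
    ∑ l ∈ {l : Fin (n + n) → Fin (m + m) | reflectPositions l = l},
        Nat.card (chains Interlaces t (Fin.castLE hnm) l) =
      ∑ k : Fin n ↪o Fin m, Nat.card (chains Interlaces t (Fin.castLE hnm) (symmPositions k)) := by
  refine (sum_of_injOn (fun k : Fin n ↪o Fin m => symmPositions k) (fun k _ k' _ h => ?_)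
    (fun k _ => ?_) (fun l hl hk => ?_) fun k _ => rfl).symm
  · exact DFunLike.coe_injective (symmPositions_injective h)
  · exact mem_filter.mpr ⟨mem_univ _, reflectPositions_symmPositions k⟩
  · refine Nat.card_eq_zero.mpr (.inl ⟨fun X => hk ?_⟩)
    obtain ⟨k, hk⟩ := exists_symmPositions_eq
      (strictMono_of_mem_chains (Fin.strictMono_castLE hnm) X.2) (mem_filter.mp hl).2
    exact ⟨k, mem_coe.mpr (mem_univ k), hk⟩

theorem card_planePartitions (a b c : ℕ) :
    (Nat.card {P : Fin a × Fin b → Fin (c + 1) // Antitone P} : ℚ) =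
      (jacobiTrudiMatrix (completeHom (a + b))
        (reflectPositions (Fin.castLE (Nat.le_add_right a c)))).det := by
  rw [Nat.card_congr (planePartitionEquiv b rfl)]
  exact card_chains_interlaces _ _ fun i j hij =>
    Fin.rev_lt_rev.mpr (Fin.strictMono_castLE _ (Fin.rev_lt_rev.mpr hij))

theorem card_selfComplementary (a b c : ℕ) :
    (Nat.card {P : Fin (a + a) × Fin (b + b) → Fin (c + c + 1) // Antitone P ∧
        ∀ p : Fin (a + a) × Fin (b + b), (P p : ℕ) + P (p.1.rev, p.2.rev) = c + c} : ℚ) =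
      ∑ k : Fin a ↪o Fin (a + c),
        (jacobiTrudiMatrix (completeHom (a + b)) (symmPositions k)).det := by
  have hchains := card_palindromic_chains (n := a + b)
    (x₀ := Fin.castLE (Nat.le.intro (add_add_add_comm a a c c))) reflectPositions_involutive
    (fun q l (h : Interlaces q l) => h.reflectPositions) fun l => mem_filter_univ l
  rw [add_add_add_comm a b a b] at hchains
  rw [Nat.card_congr (selfComplementaryEquiv (b + b) (add_add_add_comm a a c c)), hchains,
    sum_card_chains_interlaces_symmPositions, Nat.cast_sum]
  exact sum_congr rfl fun k _ =>
    card_chains_interlaces _ _ (strictMono_symmPositions k.strictMono)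

end Counting

end PlanePartition

open PlanePartition

/-- Stanley's theorem: the number of self-complementary plane partitions inside a
`(2a) × (2b) × (2c)` box equals the number of ordered pairs of plane partitions each
fitting inside an `a × b × c` box. Plane partitions in an `a × b × c` box are encoded
as antitone maps `[a] × [b] → {0,…,c}`; `P` is self-complementary when
`P(i,j) + P(2a+1-i, 2b+1-j) = 2c` for all `(i,j)`. -/
theorem stmt_18 (a b c : ℕ) :
    Nat.card {P : Fin (2 * a) × Fin (2 * b) → Fin (2 * c + 1) //
        Antitone P ∧
        ∀ p : Fin (2 * a) × Fin (2 * b),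
          (P p : ℕ) + (P (p.1.rev, p.2.rev) : ℕ) = 2 * c} =
    (Nat.card {P : Fin a × Fin b → Fin (c + 1) // Antitone P}) ^ 2 := by
  have : Nonempty {P : Fin a × Fin b → Fin (c + 1) // Antitone P} := ⟨0, antitone_const⟩
  have hpos : (Nat.card {P : Fin a × Fin b → Fin (c + 1) // Antitone P} : ℚ) ≠ 0 :=
    Nat.cast_ne_zero.mpr Nat.card_pos.ne'
  rw [card_planePartitions] at hpos
  have hsum := sum_det_jacobiTrudiMatrix_symmPositions (fun _ => completeHom_of_neg) _ hpos
  rw [← card_selfComplementary, ← card_planePartitions] at hsum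
  rw [two_mul a, two_mul b, two_mul c]
  exact_mod_cast hsum
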